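/- arXiv:1603.06269 — 2 statements merged into one kernel-verified Lean document; each statement's English description precedes it below -/
import Mathlib

section
/- Let n ≥ 3 be an odd integer, K a number field of degree n with signature (r1, r2), and O an order in K. Then the cardinality of H(O) equals 2^{r1+r2−1} times the cardinality of the 2-torsion subgroup of the class group of O: #H(O) = 2^{r1+r2−1} · #Cl₂(O). -/
set_option synthInstance.maxHeartbeats 1000000
set_option maxHeartbeats 1000000
open NumberField FractionalIdeal

variable (K : Type) [Field K] [NumberField K] (O : Subring K) [IsFractionRing O K]

/-- The group of pairs `(I, δ)` where `I` is an invertible fractional `O`-ideal in `K` and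
`δ ∈ Kˣ` with `I² = δ·O` and `N_{K/ℚ}(δ) > 0`.  (Here `toPrincipalIdeal O K δ` is the
principal fractional ideal `δ·O`, as a unit of the monoid of fractional ideals.) -/
noncomputable def HPairs : Subgroup ((FractionalIdeal (nonZeroDivisors O) K)ˣ × Kˣ) where
  carrier := {p | p.1 ^ 2 = toPrincipalIdeal O K p.2 ∧ 0 < Algebra.norm ℚ (p.2 : K)}
  one_mem' := by
    refine ⟨?_, ?_⟩
    · rw [Prod.fst_one, one_pow, Prod.snd_one, _root_.map_one]
    · rw [Prod.snd_one, Units.val_one, _root_.map_one]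
      exact one_pos
  mul_mem' := by
    rintro a b ⟨ha1, ha2⟩ ⟨hb1, hb2⟩
    refine ⟨?_, ?_⟩
    · rw [Prod.fst_mul, mul_pow, ha1, hb1, Prod.snd_mul, _root_.map_mul]
    · rw [Prod.snd_mul, Units.val_mul, _root_.map_mul]
      exact mul_pos ha2 hb2
  inv_mem' := by
    rintro a ⟨ha1, ha2⟩
    refine ⟨?_, ?_⟩
    · rw [Prod.fst_inv, inv_pow, ha1, Prod.snd_inv, _root_.map_inv]
    · rw [Prod.snd_inv]
      have h1 : Algebra.norm ℚ ((a.2 : K)) * Algebra.norm ℚ ((↑(a.2)⁻¹ : K)) = 1 := by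
        rw [← _root_.map_mul, ← Units.val_mul, mul_inv_cancel, Units.val_one, _root_.map_one]
      have h2 : Algebra.norm ℚ ((↑(a.2)⁻¹ : K)) = (Algebra.norm ℚ ((a.2 : K)))⁻¹ :=
        eq_inv_of_mul_eq_one_right h1
      rw [h2]
      exact inv_pos.mpr ha2

/-- The subgroup of pairs of the form `(κ·O, κ²)` for `κ ∈ Kˣ`; quotienting by it identifies
`(I, δ)` with `(κI, κ²δ)`. -/
noncomputable def EqvPairs : Subgroup ((FractionalIdeal (nonZeroDivisors O) K)ˣ × Kˣ) :=
  ((toPrincipalIdeal O K).prod (powMonoidHom 2)).range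

/-- The group `H(O)` of equivalence classes of pairs `(I, δ)` with `I² = δ·O` and
`N(δ) > 0`, where `(I, δ) ∼ (κI, κ²δ)` for `κ ∈ Kˣ`. -/
noncomputable abbrev HGroup : Type :=
  HPairs K O ⧸ Subgroup.comap (HPairs K O).subtype (EqvPairs K O)

/-!
Forgetting `δ` maps `H(O)` to the class group.  Since the degree is odd, `N(-δ) = -N(δ)`, so the
condition `N(δ) > 0` can be met by a change of sign and the image is the whole 2-torsion.  The
kernel consists of the classes of `(O, u)` with `u` a unit of positive norm, and such a class is
trivial exactly when `u` is a square; hence the kernel is `P / P²`, where `P` is the group of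
units of positive norm of `O`.

The torsion units of a number field of odd degree are `±1`, and `-1` has norm `-1`.  So `P`
embeds into the units of the maximal order modulo torsion, free of rank `r₁ + r₂ - 1`.  The
image has finite index because `O` contains `m·𝓞 K`, where `m` is the index of `O`, and thus
every unit of `𝓞 K` that is congruent to `1` modulo `m`.  Therefore `P` is free of the same
rank, and `#(P / P²) = 2 ^ (r₁ + r₂ - 1)`.
-/

section PowIndex

theorem index_range_powMonoidHom_of_injective {A B : Type*} [CommGroup A] [CommGroup B]
    [Module.Free ℤ (Additive A)] [Module.Finite ℤ (Additive A)] (f : B →* A)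
    (hf : Function.Injective f) [f.range.FiniteIndex] (k : ℕ) :
    (powMonoidHom k : B →* B).range.index = k ^ Module.finrank ℤ (Additive A) := by
  let g : Additive B →ₗ[ℤ] Additive A := f.toAdditive.toIntLinearMap
  have e : Additive B ≃ₗ[ℤ] LinearMap.range g := LinearEquiv.ofInjective g hf
  have : Module.Finite ℤ (Additive B) := Module.Finite.equiv e.symm
  have : Module.Free ℤ (Additive B) := Module.Free.of_equiv e.symm
  have : Finite (Additive A ⧸ LinearMap.range g) := f.range.finite_quotient_of_finiteIndex
  have hrank : Module.finrank ℤ (Additive B) = Module.finrank ℤ (Additive A) :=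
    e.finrank_eq.trans ((Submodule.finiteQuotient_iff _).1 this)
  rw [← hrank, ← AddSubgroup.index_range_nsmul (Additive B) k]
  rfl

theorem finiteIndex_range_comp {G₁ G₂ G₃ : Type*} [Group G₁] [Group G₂] [Group G₃]
    (g : G₂ →* G₃) (f : G₁ →* G₂) [hg : g.range.FiniteIndex] [f.range.FiniteIndex] :
    (g.comp f).range.FiniteIndex := by
  have := Subgroup.finiteIndex_of_le (le_sup_left : f.range ≤ f.range ⊔ g.ker)
  rw [MonoidHom.range_comp, Subgroup.finiteIndex_iff, Subgroup.index_map]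
  exact mul_ne_zero this.index_ne_zero hg.index_ne_zero

end PowIndex

section UnitGroups

variable {R S : Type*} [CommRing R] [CommRing S]

theorem mem_range_unitsMap_iff {f : R →+* S} (hf : Function.Injective f) {u : Sˣ} :
    u ∈ (Units.map (f : R →* S)).range ↔ (u : S) ∈ f.range ∧ (↑u⁻¹ : S) ∈ f.range := by
  refine ⟨?_, ?_⟩
  · rintro ⟨v, rfl⟩
    exact ⟨⟨v, rfl⟩, ⟨↑v⁻¹, rfl⟩⟩
  · rintro ⟨⟨a, ha⟩, ⟨b, hb⟩⟩
    have hab : a * b = 1 := hf (by rw [map_mul, ha, hb, Units.mul_inv, map_one])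
    exact ⟨Units.mkOfMulEqOne a b hab, Units.ext ha⟩

theorem finiteIndex_range_unitsMap {f : R →+* S} (hf : Function.Injective f) (I : Ideal S)
    [Finite (S ⧸ I)] (hI : ∀ x ∈ I, x ∈ f.range) :
    (Units.map (f : R →* S)).range.FiniteIndex := by
  let red : Sˣ →* (S ⧸ I)ˣ := Units.map (Ideal.Quotient.mk I : S →* S ⧸ I)
  have mem_range_of_red_eq_one (u : Sˣ) (hu : red u = 1) : (u : S) ∈ f.range := by
    have hmem : (u : S) - 1 ∈ I := Ideal.Quotient.eq.1 (congrArg Units.val hu)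
    simpa using add_mem (hI _ hmem) (one_mem f.range)
  refine Subgroup.finiteIndex_of_le (H := red.ker) fun u hu => ?_
  exact (mem_range_unitsMap_iff hf).2
    ⟨mem_range_of_red_eq_one u hu, mem_range_of_red_eq_one u⁻¹ (inv_mem hu)⟩

end UnitGroups

section PrincipalIdeals

variable {R L : Type*} [CommRing R] [Field L] [Algebra R L] [IsFractionRing R L]

theorem toPrincipalIdeal_unitsMap (u : Rˣ) :
    toPrincipalIdeal R L (Units.map (algebraMap R L : R →* L) u) = 1 := by
  rw [Units.ext_iff, coe_toPrincipalIdeal, Units.coe_map, MonoidHom.coe_coe,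
    ← coeIdeal_span_singleton, Ideal.span_singleton_eq_top.2 u.isUnit, coeIdeal_top, Units.val_one]

theorem toPrincipalIdeal_eq_one_iff {x : Lˣ} :
    toPrincipalIdeal R L x = 1 ↔ ∃ u : Rˣ, Units.map (algebraMap R L : R →* L) u = x := by
  have mem_range_of_eq_one {y : Lˣ} (hy : toPrincipalIdeal R L y = 1) :
      (y : L) ∈ (algebraMap R L).range := by
    refine (FractionalIdeal.mem_one_iff (nonZeroDivisors R)).1 ?_
    rw [← Units.val_one, ← hy, coe_toPrincipalIdeal]
    exact mem_spanSingleton_self _ _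
  refine ⟨fun hx => ?_, ?_⟩
  · exact (mem_range_unitsMap_iff (IsFractionRing.injective R L)).2
      ⟨mem_range_of_eq_one hx, mem_range_of_eq_one (by rw [_root_.map_inv, hx, inv_one])⟩
  · rintro ⟨u, rfl⟩
    exact toPrincipalIdeal_unitsMap u

theorem toPrincipalIdeal_neg (x : Lˣ) : toPrincipalIdeal R L (-x) = toPrincipalIdeal R L x := by
  have h : toPrincipalIdeal R L (-1) = 1 := by
    convert toPrincipalIdeal_unitsMap (R := R) (L := L) (-1)
    ext
    simp
  rw [← neg_one_mul, _root_.map_mul, h, one_mul]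

theorem classGroupMk_eq_one_iff [IsDomain R] {I : (FractionalIdeal (nonZeroDivisors R) L)ˣ} :
    ClassGroup.mk L I = 1 ↔ ∃ x : Lˣ, toPrincipalIdeal R L x = I := by
  have hI : ClassGroup.equiv L (ClassGroup.mk L I) = (I : _ ⧸ (toPrincipalIdeal R L).range) := by
    rw [ClassGroup.equiv_mk, canonicalEquiv_self]
    rfl
  rw [← (ClassGroup.equiv L).map_eq_one_iff, hI, QuotientGroup.eq_one_iff]
  rfl

end PrincipalIdeals

section NormSign

theorem norm_neg_of_odd_finrank {A B : Type*} [CommRing A] [Ring B] [Algebra A B]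
    [Module.Free A B] (hodd : Odd (Module.finrank A B)) (x : B) :
    Algebra.norm A (-x) = -Algebra.norm A x := by
  have h : Algebra.norm A (-1 : B) = -1 := by
    simpa [hodd.neg_one_pow] using Algebra.norm_algebraMap (S := B) (-1 : A)
  rw [← neg_one_mul, _root_.map_mul, h, neg_one_mul]

variable {F L : Type*} [CommRing F] [LinearOrder F] [IsStrictOrderedRing F] [Ring L]
  [Algebra F L]

theorem norm_pos_or_norm_neg_pos [Module.Free F L] (hodd : Odd (Module.finrank F L)) (x : Lˣ) :
    0 < Algebra.norm F (x : L) ∨ 0 < Algebra.norm F ((-x : Lˣ) : L) := by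
  rw [Units.val_neg, norm_neg_of_odd_finrank hodd, neg_pos]
  exact (x.isUnit.map (Algebra.norm F)).ne_zero.lt_or_gt.symm

theorem norm_sq_pos (x : Lˣ) : 0 < Algebra.norm F ((x ^ 2 : Lˣ) : L) := by
  rw [Units.val_pow_eq_pow_val, _root_.map_pow]
  exact sq_pos_of_ne_zero (x.isUnit.map (Algebra.norm F)).ne_zero

variable (F L) in
/-- The units of `R` whose norm from the `R`-algebra `L` to the ordered ring `F` is positive.
For an order `R` in a number field `L` of odd degree and `F = ℚ`, they form a complement of the
torsion subgroup `±1`, which makes them a free group. -/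
noncomputable def posNormUnits (R : Type*) [CommRing R] [Algebra R L] : Subgroup Rˣ :=
  (Units.posSubgroup F).comap
    ((Units.map (Algebra.norm F)).comp (Units.map (algebraMap R L : R →* L)))

instance finiteIndex_posNormUnits (R : Type*) [CommRing R] [Algebra R L] :
    (posNormUnits F L R).FiniteIndex := by
  have : (Units.posSubgroup F).FiniteIndex := ⟨by simp [Units.index_posSubgroup]⟩
  rw [posNormUnits, Subgroup.finiteIndex_iff, Subgroup.index_comap]
  exact Subgroup.isFiniteRelIndex_of_finiteIndex.relIndex_ne_zero

theorem exists_posNormUnits_sq_eq {R : Type*} [CommRing R] [Algebra R L] [Module.Free F L]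
    (hodd : Odd (Module.finrank F L)) (v : Rˣ) :
    ∃ w : posNormUnits F L R, (w : Rˣ) ^ 2 = v ^ 2 := by
  rcases norm_pos_or_norm_neg_pos (F := F) hodd (Units.map (algebraMap R L : R →* L) v) with h | h
  · exact ⟨⟨v, h⟩, rfl⟩
  · have hneg : 0 < Algebra.norm F (algebraMap R L ↑(-v)) := by simpa using h
    exact ⟨⟨-v, hneg⟩, neg_sq v⟩

end NormSign

section MaximalOrder

variable (R L : Type*) [CommRing R] [Algebra.IsIntegral ℤ R] [Field L] [Algebra R L]

/-- The canonical map to the maximal order of `L`, for instance the inclusion of an order `R`. -/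
noncomputable def toRingOfIntegers : R →+* 𝓞 L :=
  (IsIntegralClosure.lift ℤ (𝓞 L) L : R →ₐ[ℤ] 𝓞 L)

theorem algebraMap_toRingOfIntegers (x : R) :
    algebraMap (𝓞 L) L (toRingOfIntegers R L x) = algebraMap R L x :=
  IsIntegralClosure.algebraMap_lift ℤ (𝓞 L) L x

theorem toRingOfIntegers_injective [FaithfulSMul R L] :
    Function.Injective (toRingOfIntegers R L) := by
  refine Function.Injective.of_comp (f := algebraMap (𝓞 L) L) ?_
  simpa only [funext_iff, Function.comp_def, algebraMap_toRingOfIntegers]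
    using FaithfulSMul.algebraMap_injective R L

/-- The map from the units of positive norm to the units of the maximal order modulo torsion, a
free group whose rank is given by Dirichlet's unit theorem. -/
noncomputable def posNormUnitsModTorsion [CharZero L] :
    posNormUnits ℚ L R →* (𝓞 L)ˣ ⧸ Units.torsion L :=
  ((QuotientGroup.mk' (Units.torsion L)).comp
    (Units.map (toRingOfIntegers R L : R →* 𝓞 L))).comp (posNormUnits ℚ L R).subtype

theorem posNormUnitsModTorsion_injective [NumberField L] [FaithfulSMul R L]
    (hodd : Odd (Module.finrank ℚ L)) : Function.Injective (posNormUnitsModTorsion R L) := by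
  rw [injective_iff_map_eq_one]
  rintro ⟨u, hu_norm⟩ hu_tors
  let v : (𝓞 L)ˣ := Units.map (toRingOfIntegers R L : R →* 𝓞 L) u
  have hv_tors : v ∈ Units.torsion L := (QuotientGroup.eq_one_iff v).1 hu_tors
  rcases Units.torsion_eq_one_or_neg_one_of_odd_finrank hodd ⟨v, hv_tors⟩ with hv | hv
  · exact Subtype.ext (Units.map_injective (toRingOfIntegers_injective R L) (by simpa using hv))
  · have hu : algebraMap R L u = -1 := by
      rw [← algebraMap_toRingOfIntegers]
      simpa [v] using congrArg (algebraMap (𝓞 L) L) (congrArg Units.val hv)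
    have hnorm : 0 < Algebra.norm ℚ (algebraMap R L u) := hu_norm
    rw [hu, norm_neg_of_odd_finrank hodd, _root_.map_one] at hnorm
    norm_num at hnorm

end MaximalOrder

section OrderUnits

variable (R L : Type*) [CommRing R] [Field L] [NumberField L] [Algebra R L] [IsFractionRing R L]
  [Module.Finite ℤ R]

theorem finiteIndex_range_toRingOfIntegers :
    (toRingOfIntegers R L).toAddMonoidHom.range.FiniteIndex := by
  let f : R →ₗ[ℤ] 𝓞 L := (toRingOfIntegers R L).toAddMonoidHom.toIntLinearMap
  have hf : Function.Injective f := toRingOfIntegers_injective R L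
  have hrank : Module.finrank ℤ (LinearMap.range f) = Module.finrank ℤ (𝓞 L) := by
    rw [LinearMap.finrank_range_of_inj hf, ← IsFractionRing.finrank_eq ℤ ℚ R L,
      ← IsFractionRing.finrank_eq ℤ ℚ (𝓞 L) L]
  have : Finite (𝓞 L ⧸ LinearMap.range f) := (Submodule.finiteQuotient_iff _).2 hrank
  exact AddSubgroup.finiteIndex_iff_finite_quotient.2 this

instance finiteIndex_range_unitsMap_toRingOfIntegers :
    (Units.map (toRingOfIntegers R L : R →* 𝓞 L)).range.FiniteIndex := by
  let H : AddSubgroup (𝓞 L) := (toRingOfIntegers R L).toAddMonoidHom.range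
  have hH : H.FiniteIndex := finiteIndex_range_toRingOfIntegers R L
  have : Finite (𝓞 L ⧸ Ideal.span {(H.index : 𝓞 L)}) :=
    Ideal.finiteQuotientOfFreeOfNeBot _ (by simpa using hH.index_ne_zero)
  refine finiteIndex_range_unitsMap (toRingOfIntegers_injective R L)
    (Ideal.span {(H.index : 𝓞 L)}) fun x hx => ?_
  obtain ⟨y, rfl⟩ := Ideal.mem_span_singleton.1 hx
  rw [← nsmul_eq_mul]
  exact H.nsmul_index_mem y

instance finiteIndex_range_posNormUnitsModTorsion :
    (posNormUnitsModTorsion R L).range.FiniteIndex := by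
  have : (QuotientGroup.mk' (Units.torsion L)).range.FiniteIndex := by
    rw [QuotientGroup.range_mk']
    infer_instance
  have : (posNormUnits ℚ L R).subtype.range.FiniteIndex := by
    rw [Subgroup.range_subtype]
    infer_instance
  have := finiteIndex_range_comp (QuotientGroup.mk' (Units.torsion L))
    (Units.map (toRingOfIntegers R L : R →* 𝓞 L))
  exact finiteIndex_range_comp _ _

theorem index_range_powMonoidHom_posNormUnits (hodd : Odd (Module.finrank ℚ L)) (k : ℕ) :
    (powMonoidHom k : posNormUnits ℚ L R →* posNormUnits ℚ L R).range.index =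
      k ^ Units.rank L := by
  rw [← Units.finrank_modTorsion]
  exact index_range_powMonoidHom_of_injective _ (posNormUnitsModTorsion_injective R L hodd) k

end OrderUnits

namespace HGroup

theorem mk_eq_mk_iff {p q : HPairs K O} :
    (p : HGroup K O) = q ↔
      ∃ κ : Kˣ, q.1.1 = toPrincipalIdeal O K κ * p.1.1 ∧ q.1.2 = κ ^ 2 * p.1.2 := by
  rw [QuotientGroup.eq]
  refine exists_congr fun κ => Prod.ext_iff.trans (and_congr ?_ ?_)
  · exact eq_inv_mul_iff_mul_eq.trans (by rw [mul_comm, eq_comm]; rfl)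
  · exact eq_inv_mul_iff_mul_eq.trans (by rw [mul_comm, eq_comm]; rfl)

/-- The homomorphism `H(O) → Cl(O)` sending the class of `(I, δ)` to the class of `I`. -/
noncomputable def toClassGroup : HGroup K O →* ClassGroup O :=
  QuotientGroup.lift _
    ((ClassGroup.mk K).comp ((MonoidHom.fst _ _).comp (HPairs K O).subtype))
    fun _ ⟨κ, hκ⟩ => classGroupMk_eq_one_iff.2 ⟨κ, congrArg Prod.fst hκ⟩

/-- The homomorphism to `H(O)` sending a unit `u` of `O` of positive norm to the class of
`(O, u)`. -/
noncomputable def ofPosNormUnits : posNormUnits ℚ K O →* HGroup K O :=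
  (QuotientGroup.mk' _).comp <|
    MonoidHom.codRestrict
      (MonoidHom.prod 1 ((Units.map (algebraMap O K : O →* K)).comp (posNormUnits ℚ K O).subtype))
      (HPairs K O) fun u => ⟨(one_pow 2).trans (toPrincipalIdeal_unitsMap u.1).symm, u.2⟩

theorem range_toClassGroup (hodd : Odd (Module.finrank ℚ K)) :
    (toClassGroup K O).range = (powMonoidHom 2 : ClassGroup O →* ClassGroup O).ker := by
  refine le_antisymm ?_ fun c hc => ?_
  · rintro _ ⟨p, rfl⟩
    obtain ⟨⟨⟨I, δ⟩, hI, -⟩, rfl⟩ := QuotientGroup.mk_surjective p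
    exact (_root_.map_pow (ClassGroup.mk K) I 2).symm.trans
      (classGroupMk_eq_one_iff.2 ⟨δ, hI.symm⟩)
  · obtain ⟨I, rfl⟩ : ∃ I, ClassGroup.mk K I = c := ClassGroup.induction K (fun I => ⟨I, rfl⟩) c
    obtain ⟨δ, hδ⟩ := classGroupMk_eq_one_iff.1 ((_root_.map_pow (ClassGroup.mk K) I 2).trans hc)
    rcases norm_pos_or_norm_neg_pos hodd δ with hpos | hpos
    · exact ⟨QuotientGroup.mk ⟨(I, δ), hδ.symm, hpos⟩, rfl⟩
    · exact ⟨QuotientGroup.mk ⟨(I, -δ), ((toPrincipalIdeal_neg δ).trans hδ).symm, hpos⟩, rfl⟩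

theorem range_ofPosNormUnits : (ofPosNormUnits K O).range = (toClassGroup K O).ker := by
  refine le_antisymm ?_ fun c hc => ?_
  · rintro _ ⟨u, rfl⟩
    exact _root_.map_one (ClassGroup.mk K)
  · obtain ⟨⟨⟨I, δ⟩, hI, hδ⟩, rfl⟩ := QuotientGroup.mk_surjective c
    obtain ⟨κ, rfl⟩ := classGroupMk_eq_one_iff.1 hc
    obtain ⟨u, hu⟩ : ∃ u : Oˣ, Units.map (algebraMap O K : O →* K) u = δ / κ ^ 2 := by
      rw [← toPrincipalIdeal_eq_one_iff, _root_.map_div, _root_.map_pow, div_eq_one]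
      exact hI.symm
    obtain rfl : δ = κ ^ 2 * Units.map (algebraMap O K : O →* K) u := by
      rw [hu, mul_div_cancel]
    have hu_pos : 0 < Algebra.norm ℚ (algebraMap O K u) := by
      rw [Units.val_mul, _root_.map_mul] at hδ
      exact pos_of_mul_pos_right hδ (norm_sq_pos κ).le
    exact ⟨⟨u, hu_pos⟩, (mk_eq_mk_iff K O).2 ⟨κ, (mul_one _).symm, rfl⟩⟩

theorem ofPosNormUnits_eq_one_iff {u : posNormUnits ℚ K O} :
    ofPosNormUnits K O u = 1 ↔ ∃ v : Oˣ, v ^ 2 = u := by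
  have map_injective : Function.Injective (Units.map (algebraMap O K : O →* K)) :=
    Units.map_injective (IsFractionRing.injective O K)
  rw [eq_comm]
  refine (mk_eq_mk_iff K O).trans ⟨?_, ?_⟩
  · rintro ⟨κ, hκ, hu⟩
    obtain ⟨v, rfl⟩ := toPrincipalIdeal_eq_one_iff.1 (hκ.trans (mul_one _)).symm
    refine ⟨v, map_injective ?_⟩
    exact (_root_.map_pow _ v 2).trans (hu.trans (mul_one _)).symm
  · rintro ⟨v, hv⟩
    refine ⟨Units.map (algebraMap O K : O →* K) v, ?_, ?_⟩
    · rw [toPrincipalIdeal_unitsMap]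
      exact (mul_one _).symm
    · rw [← _root_.map_pow, hv]
      exact (mul_one _).symm

theorem ker_ofPosNormUnits (hodd : Odd (Module.finrank ℚ K)) :
    (ofPosNormUnits K O).ker =
      (powMonoidHom 2 : posNormUnits ℚ K O →* posNormUnits ℚ K O).range := by
  ext u
  rw [MonoidHom.mem_ker, ofPosNormUnits_eq_one_iff]
  refine ⟨?_, ?_⟩
  · rintro ⟨v, hv⟩
    obtain ⟨w, hw⟩ := exists_posNormUnits_sq_eq (F := ℚ) (L := K) hodd v
    exact ⟨w, Subtype.ext (hw.trans hv)⟩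
  · rintro ⟨w, rfl⟩
    exact ⟨w, rfl⟩

end HGroup

/-- **The order of `H(O)`.** For an order `O` in a degree `n` number field `K` of signature
`(r1, r2)`, with `n ≥ 3` odd, one has `#H(O) = 2^(r1+r2-1) · #Cl₂(O)`. -/
theorem card_HGroup_eq (n r1 r2 : ℕ) (hodd : Odd n) (hn : 3 ≤ n)
    (hdeg : Module.finrank ℚ K = n)
    (hr1 : Nat.card {w : InfinitePlace K // w.IsReal} = r1)
    (hr2 : Nat.card {w : InfinitePlace K // w.IsComplex} = r2)
    [Module.Finite ℤ O] :
    Nat.card (HGroup K O) = 2 ^ (r1 + r2 - 1) * Nat.card {c : ClassGroup O // c ^ 2 = 1} := by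
  subst hdeg
  have hker : Nat.card (HGroup.toClassGroup K O).ker = 2 ^ Units.rank K := by
    rw [← HGroup.range_ofPosNormUnits, ← Subgroup.index_ker, HGroup.ker_ofPosNormUnits K O hodd,
      index_range_powMonoidHom_posNormUnits O K hodd]
  have hrange : Nat.card (HGroup.toClassGroup K O).range =
      Nat.card {c : ClassGroup O // c ^ 2 = 1} := by
    rw [HGroup.range_toClassGroup K O hodd]
    rfl
  have hrank : Units.rank K = r1 + r2 - 1 := by
    classical
    rw [← hr1, ← hr2, Units.rank, InfinitePlace.card_eq_nrRealPlaces_add_nrComplexPlaces,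
      Nat.card_eq_fintype_card, Nat.card_eq_fintype_card]
  rw [← hrank, ← hker, ← hrange, ← Subgroup.index_ker, Subgroup.card_mul_index]
end

section
/- Let n ≥ 2, let 1 ≤ k ≤ n−1, and set m := min(k, n−k). Let A and B be symmetric n×n matrices with rational entries such that A_{ij} = B_{ij} = 0 for all indices with 1 ≤ i ≤ k and 1 ≤ j ≤ n−k. Then there exist homogeneous polynomials g, h ∈ ℚ[x, y], with g homogeneous of degree m and h homogeneous of degree n − 2m, such that det(x·A − y·B) = g² · h in ℚ[x, y]. In particular, the binary n-ic form det(x·A − y·B) is divisible by the square of a homogeneous form of positive degree (or is identically zero), so it has a repeated factor over ℚ. -/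
/-!
Put `m = min k (n - k)`. By symmetry, a matrix that vanishes on the top left `k × (n - k)` block
also vanishes on the top left `m × (n - m)` block. Cutting the indices into runs of lengths
`m`, `n - 2m`, `m`, it therefore has the shape
```
⎡ 0   0   P ⎤
⎢ 0   Q   * ⎥
⎣ Pᵀ  *   * ⎦
```
Exchanging the two outer columns of blocks makes this block lower triangular, so its determinant
is `(-1)ᵐ (det P)² det Q`. When the entries are forms of degree `d`, the determinants of `P` and
`Q` are forms of degrees `m d` and `(n - 2m) d`.
-/

open MvPolynomial

section BlockDeterminant

open Equiv Matrix

variable {α β R : Type*} [Fintype α] [DecidableEq α] [Fintype β] [DecidableEq β] [CommRing R]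

theorem sign_sumComm_self : Perm.sign (sumComm α α : Perm (α ⊕ α)) = (-1) ^ Fintype.card α := by
  have hconj : Perm.sign (sumComm α α : Perm (α ⊕ α)) =
      Perm.sign (prodCongrLeft fun _ : α => swap false true) := by
    refine Perm.sign_eq_sign_of_equiv _ _ (boolProdEquivSum α).symm ?_
    rintro (a | a) <;> rfl
  rw [hconj, Perm.sign_prodCongrLeft]
  simp

/-- The permutation of `(α ⊕ β) ⊕ α` that exchanges the two copies of `α` and fixes `β`. -/
def outerSwap (α β : Type*) : Perm ((α ⊕ β) ⊕ α) where
  toFun := Sum.elim (Sum.elim Sum.inr (Sum.inl ∘ Sum.inr)) (Sum.inl ∘ Sum.inl)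
  invFun := Sum.elim (Sum.elim Sum.inr (Sum.inl ∘ Sum.inr)) (Sum.inl ∘ Sum.inl)
  left_inv := by rintro ((a | b) | a) <;> rfl
  right_inv := by rintro ((a | b) | a) <;> rfl

theorem sign_outerSwap : Perm.sign (outerSwap α β) = (-1) ^ Fintype.card α := by
  let gatherOuter : (α ⊕ β) ⊕ α ≃ (α ⊕ α) ⊕ β :=
    (sumAssoc α β α).trans
      (((Equiv.refl α).sumCongr (sumComm β α)).trans (sumAssoc α α β).symm)
  have hconj : Perm.sign (outerSwap α β) =
      Perm.sign (Perm.sumCongr (sumComm α α : Perm (α ⊕ α)) (1 : Perm β)) := by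
    refine Perm.sign_eq_sign_of_equiv _ _ gatherOuter ?_
    rintro ((a | b) | a) <;> rfl
  rw [hconj, Perm.sign_sumCongr, sign_sumComm_self, Perm.sign_one, mul_one]

theorem det_fromBlocks_antitriangular (P C S : Matrix α α R) (Q : Matrix β β R)
    (U : Matrix β α R) (V : Matrix α β R) :
    (fromBlocks (fromBlocks 0 0 0 Q) (fromRows P U) (fromCols C V) S).det =
      (-1) ^ Fintype.card α * (P.det * Q.det * C.det) := by
  set M := fromBlocks (fromBlocks 0 0 0 Q) (fromRows P U) (fromCols C V) S
  have htriangular : M.submatrix id (outerSwap α β) =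
      fromBlocks (fromBlocks P 0 U Q) 0 (fromCols S V) C := by
    ext ((a | b) | a) ((a' | b') | a') <;> rfl
  have hdet : (-1) ^ Fintype.card α * M.det = P.det * Q.det * C.det := by
    rw [← det_fromBlocks_zero₁₂, ← det_fromBlocks_zero₁₂, ← htriangular, det_permute',
      sign_outerSwap]
    simp
  rw [← hdet, ← mul_assoc, ← mul_pow, neg_one_mul, neg_neg, one_pow, one_mul]

theorem det_eq_sq_mul_det_of_isSymm_of_corner_eq_zero
    {M : Matrix ((α ⊕ β) ⊕ α) ((α ⊕ β) ⊕ α) R} (hM : M.IsSymm)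
    (hzero : ∀ a c, M (.inl (.inl a)) (.inl c) = 0) :
    M.det = (-1) ^ Fintype.card α *
      ((M.submatrix (Sum.inl ∘ Sum.inl) Sum.inr).det ^ 2 *
        (M.submatrix (Sum.inl ∘ Sum.inr) (Sum.inl ∘ Sum.inr)).det) := by
  set P := M.submatrix (Sum.inl ∘ Sum.inl) Sum.inr
  set Q := M.submatrix (Sum.inl ∘ Sum.inr) (Sum.inl ∘ Sum.inr)
  have hblocks : M = fromBlocks (fromBlocks 0 0 0 Q)
      (fromRows P (M.submatrix (Sum.inl ∘ Sum.inr) Sum.inr))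
      (fromCols Pᵀ (M.submatrix Sum.inr (Sum.inl ∘ Sum.inr))) (M.submatrix Sum.inr Sum.inr) := by
    ext ((a | b) | a) ((a' | b') | a')
    case inl.inl.inl.inl => exact hzero a _
    case inl.inl.inl.inr => exact hzero a _
    case inl.inr.inl.inl => exact (hM.apply _ _).trans (hzero a' _)
    case inr.inl.inl => exact hM.apply _ _
    all_goals rfl
  rw [hblocks, det_fromBlocks_antitriangular, det_transpose]
  ring

end BlockDeterminant

theorem isSymm_of_entrywise {ι S T : Type*} {A B : Matrix ι ι S} (f : S → S → T)
    (hA : A.IsSymm) (hB : B.IsSymm) : (Matrix.of fun i j => f (A i j) (B i j)).IsSymm :=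
  .ext fun i j => congrArg₂ f (hA.apply i j) (hB.apply i j)

section HomogeneousForms

variable {σ R : Type*} [CommRing R]

theorem isHomogeneous_X_mul_C_sub_X_mul_C (s t : σ) (a b : R) :
    (X s * C a - X t * C b).IsHomogeneous 1 :=
  ((isHomogeneous_X R s).mul (isHomogeneous_C σ a)).sub
    ((isHomogeneous_X R t).mul (isHomogeneous_C σ b))

theorem isHomogeneous_det {ι : Type*} [Fintype ι] [DecidableEq ι] {d : ℕ}
    {M : Matrix ι ι (MvPolynomial σ R)} (hM : ∀ i j, (M i j).IsHomogeneous d) :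
    M.det.IsHomogeneous (Fintype.card ι * d) := by
  rw [Matrix.det_apply]
  refine IsHomogeneous.sum _ _ _ fun τ _ => ?_
  have hprod : (∏ i, M (τ i) i).IsHomogeneous (Fintype.card ι * d) := by
    simpa using IsHomogeneous.prod Finset.univ (fun i => M (τ i) i) (fun _ => d)
      fun i _ => hM (τ i) i
  exact zsmul_mem (K := homogeneousSubmodule σ R (Fintype.card ι * d)) hprod _

theorem exists_det_eq_sq_mul_of_corner_eq_zero {m p d : ℕ}
    {M : Matrix (Fin (m + p + m)) (Fin (m + p + m)) (MvPolynomial σ R)} (hM : M.IsSymm)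
    (hform : ∀ i j, (M i j).IsHomogeneous d)
    (hzero : ∀ i j : Fin (m + p + m), (i : ℕ) < m → (j : ℕ) < m + p → M i j = 0) :
    ∃ g h : MvPolynomial σ R,
      g.IsHomogeneous (m * d) ∧ h.IsHomogeneous (p * d) ∧ M.det = g ^ 2 * h := by
  let e : (Fin m ⊕ Fin p) ⊕ Fin m ≃ Fin (m + p + m) :=
    (finSumFinEquiv.sumCongr (Equiv.refl _)).trans finSumFinEquiv
  let N := M.submatrix e e
  have hcorner (a : Fin m) (c : Fin m ⊕ Fin p) : N (.inl (.inl a)) (.inl c) = 0 :=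
    hzero _ _ a.isLt (finSumFinEquiv c).isLt
  have hg := isHomogeneous_det (M := N.submatrix (Sum.inl ∘ Sum.inl) Sum.inr)
    fun _ _ => hform _ _
  have hh := isHomogeneous_det (M := N.submatrix (Sum.inl ∘ Sum.inr) (Sum.inl ∘ Sum.inr))
    fun _ _ => hform _ _
  rw [Fintype.card_fin] at hg hh
  refine ⟨_, _, hg, hh.C_mul ((-1) ^ m), ?_⟩
  rw [← Matrix.det_submatrix_equiv_self e M,
    det_eq_sq_mul_det_of_isSymm_of_corner_eq_zero (hM.submatrix e) hcorner,
    Fintype.card_fin, C_pow, C_neg, C_1, mul_left_comm]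

theorem det_eq_sq_mul_of_common_block_zero_general {n k l d : ℕ} (hn : k + l = n)
    {M : Matrix (Fin n) (Fin n) (MvPolynomial σ R)} (hM : M.IsSymm)
    (hform : ∀ i j, (M i j).IsHomogeneous d)
    (hzero : ∀ i j : Fin n, (i : ℕ) < k → (j : ℕ) < l → M i j = 0) :
    ∃ g h : MvPolynomial σ R,
      g.IsHomogeneous (min k l * d) ∧ h.IsHomogeneous ((n - 2 * min k l) * d) ∧
      M.det = g ^ 2 * h := by
  set m := min k l
  have hcorner : ∀ i j : Fin n, (i : ℕ) < m → (j : ℕ) < n - m → M i j = 0 := by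
    intro i j hi hj
    rcases le_total k l with hle | hle
    · exact hzero i j (by omega) (by omega)
    · exact (hM.apply j i).trans (hzero j i (by omega) (by omega))
  obtain ⟨p, hp⟩ : ∃ p, n = m + p + m := ⟨n - 2 * m, by omega⟩
  clear_value m
  subst hp
  rw [show m + p + m - 2 * m = p by omega]
  exact exists_det_eq_sq_mul_of_corner_eq_zero hM hform fun i j hi hj => hcorner i j hi (by omega)

end HomogeneousForms

/-- **Pairs with a common isotropic subspace have a resolvent with a repeated factor.**
Let `A`, `B` be symmetric `n × n` rational matrices vanishing on the block of indices
`i < k`, `j < n - k` (1-indexed: `1 ≤ i ≤ k`, `1 ≤ j ≤ n-k`).  Then, with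
`m = min k (n-k)`, the binary `n`-ic form `det(x·A - y·B)` factors as `g² · h` with `g`
homogeneous of degree `m` and `h` homogeneous of degree `n - 2m`. -/
theorem det_eq_sq_mul_of_common_block_zero (n k : ℕ) (hn : 2 ≤ n) (hk1 : 1 ≤ k)
    (hk2 : k ≤ n - 1)
    (A B : Matrix (Fin n) (Fin n) ℚ) (hA : A.IsSymm) (hB : B.IsSymm)
    (hz : ∀ i j : Fin n, (i : ℕ) < k → (j : ℕ) < n - k → A i j = 0 ∧ B i j = 0) :
    ∃ g h : MvPolynomial (Fin 2) ℚ,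
      g.IsHomogeneous (min k (n - k)) ∧ h.IsHomogeneous (n - 2 * min k (n - k)) ∧
      Matrix.det (Matrix.of fun i j : Fin n =>
          X 0 * MvPolynomial.C (A i j) - X 1 * MvPolynomial.C (B i j)) = g ^ 2 * h := by
  simpa only [mul_one] using det_eq_sq_mul_of_common_block_zero_general (d := 1)
    (Nat.add_sub_of_le (hk2.trans (Nat.sub_le n 1)))
    (isSymm_of_entrywise (fun a b => X 0 * C a - X 1 * C b) hA hB)
    (fun i j => by exact isHomogeneous_X_mul_C_sub_X_mul_C 0 1 (A i j) (B i j))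
    (fun i j hi hj => by simp [hz i j hi hj])
end
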